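/- Let G be a non-complete finite connected simple graph on n ≥ 4 vertices whose distance eigenvalues satisfy ∂_3(G) ≤ −1 and ∂_n(G) ≥ −3. Then there exist two proper nonempty graphs G_1 and G_2, at most one of which contains an induced subgraph isomorphic to P_3, such that G ≅ G_1 ∨ G_2. Furthermore, if G_1 contains an induced P_3, then G_1 is connected and G_2 is a complete graph. -/

import Mathlib

/-- The distance matrix of a finite simple graph, over `ℝ`. -/
noncomputable def distMatrix {V : Type*} [Fintype V] (G : SimpleGraph V) : Matrix V V ℝ :=
  Matrix.of fun u v => (G.dist u v : ℝ)

/-- The multiset of distance eigenvalues of `G` (the roots, with multiplicity, of the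
characteristic polynomial of the distance matrix). -/
noncomputable def distEigs {V : Type*} [Fintype V] [DecidableEq V] (G : SimpleGraph V) :
    Multiset ℝ :=
  (distMatrix G).charpoly.roots

/-- The distance eigenvalues of `G` listed in non-increasing order,
`∂_1 ≥ ∂_2 ≥ ... ≥ ∂_n`; the `i`-th eigenvalue `∂_i` is `(sortedDistEigs G).getD (i-1) 0`. -/
noncomputable def sortedDistEigs {V : Type*} [Fintype V] [DecidableEq V] (G : SimpleGraph V) :
    List ℝ :=
  ((distEigs G).sort (· ≤ ·)).reverse

/-- `G` contains an induced subgraph isomorphic to `H`. -/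
def hasInducedIso {V W : Type*} (G : SimpleGraph V) (H : SimpleGraph W) : Prop :=
  ∃ s : Set V, Nonempty (G.induce s ≃g H)

/-!
If `G` has diameter at most two, then `D + I = J + A(Gᶜ)`.

The bound `∂_n ≥ -3` forces diameter at most two: on four consecutive vertices of a geodesic the
vector `(2, 1, -1, -2)` gives the quadratic form of `D + 3 • I` the value `-4`. The bound `∂_3 ≤ -1`
says that `D + I` has at most two positive eigenvalues, so `Gᶜ` has no induced subgraph `K` for
which the form of `J + A(K)` is positive definite on a three-dimensional space; the graphs `C₅`,
`P₅`, co-gem, co-dart and co-wheel on five vertices are of this kind.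

In an induced `P₄` of `G` the end vertices have a common neighbour, which completes the `P₄` to the
complement of `C₅`, `P₅` or the co-gem. Hence `G` is `P₄`-free, and by Seinsche's argument a maximal
set `s` of vertices inducing a disconnected subgraph is completely joined to `sᶜ`. An induced `P₃`
in `s`, a vertex of another component of `s` and a vertex of `sᶜ` would form a dart; an induced `P₃`
in `sᶜ` and two nonadjacent vertices of `s` would form a wheel. So neither part contains an
induced `P₃`.
-/

section Spectral

open Matrix

variable {n : Type*} [Fintype n] [DecidableEq n] {A : Matrix n n ℝ} (hA : A.IsHermitian)

theorem dotProduct_sub_smul_one_mulVec_eq_sum (c : ℝ) (x : n → ℝ) :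
    x ⬝ᵥ (A - c • 1) *ᵥ x =
      ∑ i, (hA.eigenvalues i - c) * ((hA.eigenvectorBasis i).ofLp ⬝ᵥ x) ^ 2 := by
  have parseval := hA.eigenvectorBasis.sum_inner_mul_inner
    (WithLp.toLp 2 x) (WithLp.toLp 2 ((A - c • 1) *ᵥ x))
  simp only [EuclideanSpace.inner_eq_star_dotProduct, star_trivial] at parseval
  rw [dotProduct_comm, ← parseval]
  refine Finset.sum_congr rfl fun i _ => ?_
  have symm : A *ᵥ x ⬝ᵥ (hA.eigenvectorBasis i).ofLp =
      hA.eigenvalues i * ((hA.eigenvectorBasis i).ofLp ⬝ᵥ x) := by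
    rw [dotProduct_comm, dotProduct_mulVec, ← mulVec_transpose,
      ← conjTranspose_eq_transpose_of_trivial, hA.eq, hA.mulVec_eigenvectorBasis, smul_dotProduct,
      smul_eq_mul]
  rw [sub_mulVec, smul_mulVec, one_mulVec, sub_dotProduct, symm, smul_dotProduct, smul_eq_mul,
    dotProduct_comm x]
  ring

theorem posSemidef_sub_smul_one {c : ℝ} (hc : ∀ i, c ≤ hA.eigenvalues i) :
    (A - c • 1).PosSemidef := by
  refine .of_dotProduct_mulVec_nonneg (hA.sub (isHermitian_one.smul rfl)) fun x => ?_
  rw [star_trivial, dotProduct_sub_smul_one_mulVec_eq_sum hA]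
  exact Finset.sum_nonneg fun i _ => mul_nonneg (sub_nonneg.mpr (hc i)) (sq_nonneg _)

theorem not_posDef_transpose_mul_sub_smul_one_mul {ι : Type*} [Fintype ι] {c : ℝ}
    (hc : Fintype.card {i // c < hA.eigenvalues i} < Fintype.card ι) (B : Matrix n ι ℝ) :
    ¬ (Bᵀ * (A - c • 1) * B).PosDef := by
  intro hB
  let coords : (ι → ℝ) →ₗ[ℝ] ({i // c < hA.eigenvalues i} → ℝ) :=
    mulVecLin (of (fun i => (hA.eigenvectorBasis i.1).ofLp) * B)
  obtain ⟨y, hy, hy0⟩ := (Submodule.ne_bot_iff _).mp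
    (coords.ker_ne_bot_of_finrank_lt (by simpa only [Module.finrank_fintype_fun_eq_card]))
  refine (hB.dotProduct_mulVec_pos hy0).not_ge ?_
  rw [star_trivial, ← mulVec_mulVec, ← mulVec_mulVec, dotProduct_mulVec, vecMul_transpose,
    dotProduct_sub_smul_one_mulVec_eq_sum hA]
  refine Finset.sum_nonpos fun i _ => ?_
  by_cases hi : c < hA.eigenvalues i
  · have h0 : (hA.eigenvectorBasis i).ofLp ⬝ᵥ B *ᵥ y = 0 := by
      have := congrFun hy ⟨i, hi⟩
      rwa [mulVecLin_apply, ← mulVec_mulVec] at this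
    simp [h0]
  · exact mul_nonpos_of_nonpos_of_nonneg (sub_nonpos.mpr (not_lt.mp hi)) (sq_nonneg _)

theorem not_posDef_submatrix_sub_smul_one {ι κ : Type*} [Fintype ι] [Fintype κ] {c : ℝ}
    (hc : Fintype.card {i // c < hA.eigenvalues i} < Fintype.card ι) (f : κ → n)
    (W : Matrix ι κ ℝ) : ¬ (W * (A - c • 1).submatrix f f * Wᵀ).PosDef := by
  have hf : (A - c • 1).submatrix f f =
      ((1 : Matrix n n ℝ).submatrix id f)ᵀ * (A - c • 1) * (1 : Matrix n n ℝ).submatrix id f := by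
    rw [transpose_submatrix, transpose_one, ← Equiv.coe_refl, one_submatrix_mul, mul_submatrix_one]
    rfl
  convert not_posDef_transpose_mul_sub_smul_one_mul hA hc
    ((1 : Matrix n n ℝ).submatrix id f * Wᵀ) using 2
  simp only [hf, transpose_mul, transpose_transpose, Matrix.mul_assoc]

end Spectral

section DistanceEigenvalues

variable {V : Type*} [Fintype V] (G : SimpleGraph V)

theorem distMatrix_isHermitian : (distMatrix G).IsHermitian := by
  ext u v
  simp [distMatrix, SimpleGraph.dist_comm]

variable [DecidableEq V]

theorem sortedDistEigs_eq_ofFn :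
    sortedDistEigs G = List.ofFn (distMatrix_isHermitian G).eigenvalues₀ := by
  refine .trans ?_ (distMatrix_isHermitian G).sort_roots_charpoly_eq_eigenvalues₀
  refine List.Perm.eq_of_pairwise (le := (· ≥ ·)) (fun a b _ _ h₁ h₂ => le_antisymm h₂ h₁) ?_
    (Multiset.pairwise_sort _ _) ?_
  · exact List.pairwise_reverse.mpr (Multiset.pairwise_sort _ _)
  · refine (List.reverse_perm _).trans (Multiset.coe_eq_coe.mp ?_)
    simp [distEigs]

theorem sortedDistEigs_getD {k : ℕ} (hk : k < Fintype.card V) :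
    (sortedDistEigs G).getD k 0 = (distMatrix_isHermitian G).eigenvalues₀ ⟨k, hk⟩ := by
  rw [sortedDistEigs_eq_ofFn, List.getD_eq_getElem _ _ (by simpa using hk), List.getElem_ofFn]

variable {G}

theorem le_eigenvalues_of_le_sortedDistEigs_getD {c : ℝ}
    (hc : c ≤ (sortedDistEigs G).getD (Fintype.card V - 1) 0) (v : V) :
    c ≤ (distMatrix_isHermitian G).eigenvalues v := by
  rw [sortedDistEigs_getD G (Nat.sub_one_lt (Fintype.card_pos_iff.mpr ⟨v⟩).ne')] at hc
  exact hc.trans ((distMatrix_isHermitian G).eigenvalues₀_antitone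
    (Fin.le_def.mpr (Nat.le_sub_one_of_lt (Fin.is_lt _))))

theorem card_lt_eigenvalues_le_of_sortedDistEigs_getD_le {k : ℕ} {c : ℝ}
    (hc : (sortedDistEigs G).getD k 0 ≤ c) :
    Fintype.card {v // c < (distMatrix_isHermitian G).eigenvalues v} ≤ k := by
  by_cases hk : k < Fintype.card V
  · rw [sortedDistEigs_getD G hk] at hc
    let index : V ≃ Fin (Fintype.card V) := (Fintype.equivOfCardEq (Fintype.card_fin _)).symm
    have index_lt (v : {v // c < (distMatrix_isHermitian G).eigenvalues v}) : index v.1 < k := by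
      by_contra! h
      exact v.2.not_ge
        (((distMatrix_isHermitian G).eigenvalues₀_antitone (Fin.le_def.mpr h)).trans hc)
    have index_injective : Function.Injective fun v => (⟨index v.1, index_lt v⟩ : Fin k) :=
      fun u v h => Subtype.ext (index.injective (Fin.ext (Fin.mk.inj h)))
    simpa using Fintype.card_le_of_injective _ index_injective
  · exact (Fintype.card_subtype_le _).trans (not_lt.mp hk)

end DistanceEigenvalues

section Diameter

open SimpleGraph Matrix

variable {V : Type*} {G : SimpleGraph V}

theorem dist_getVert_getVert {u v : V} {p : G.Walk u v} (hp : p.length = G.dist u v) {i j : ℕ}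
    (hij : i ≤ j) (hj : j ≤ p.length) : G.dist (p.getVert i) (p.getVert j) = j - i := by
  have key := length_eq_dist_of_subwalk hp
    (((p.drop i).isSubwalk_take (j - i)).trans (p.isSubwalk_drop i))
  simp only [Walk.drop_getVert, Nat.add_sub_cancel' hij, Walk.take_length, Walk.drop_length] at key
  lia

theorem ediam_le_two_of_posSemidef [Fintype V] [DecidableEq V] (hG : G.Connected)
    (hD : (distMatrix G - (-3 : ℝ) • 1).PosSemidef) : G.ediam ≤ 2 := by
  refine ediam_le_of_edist_le fun u v => ?_
  obtain ⟨p, hp⟩ := hG.exists_walk_length_eq_dist u v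
  rw [← (hG.preconnected u v).coe_dist_eq_edist, ← hp]
  by_contra! h
  have hlen : 3 ≤ p.length := by exact_mod_cast h
  let f : Fin 4 → V := fun i => p.getVert i
  have dist_f (i j : Fin 4) : G.dist (f i) (f j) = (j - i : ℕ) + (i - j : ℕ) := by
    rcases le_total i j with hij | hij
    · rw [dist_getVert_getVert hp hij (by lia)]
      lia
    · rw [dist_comm, dist_getVert_getVert hp hij (by lia)]
      lia
  have f_injective : f.Injective := fun i j hij => by
    have := dist_f i j
    rw [hij, dist_self] at this
    lia
  have hf : (distMatrix G - (-3 : ℝ) • 1).submatrix f f =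
      !![3, 1, 2, 3; 1, 3, 1, 2; 2, 1, 3, 1; 3, 2, 1, 3] := by
    ext i j
    fin_cases i <;> fin_cases j <;> simp [distMatrix, dist_f, one_apply, f_injective.eq_iff]
  have form_eq : ![2, 1, -1, -2] ⬝ᵥ (distMatrix G - (-3 : ℝ) • 1).submatrix f f *ᵥ
      ![2, 1, -1, -2] = -4 := by
    rw [hf]
    simp [mulVec, dotProduct, Fin.sum_univ_four]
    norm_num
  have form_nonneg := (hD.submatrix f).dotProduct_mulVec_nonneg ![2, 1, -1, -2]
  rw [star_trivial, form_eq] at form_nonneg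
  norm_num at form_nonneg

theorem commonNeighbors_nonempty_of_ediam_le_two (hG : G.ediam ≤ 2) {u v : V}
    (huv : Gᶜ.Adj u v) : (G.commonNeighbors u v).Nonempty := by
  rw [compl_adj] at huv
  by_contra hempty
  exact (two_lt_edist_iff.mpr ⟨huv.1, huv.2, Set.not_nonempty_iff_eq_empty.mp hempty⟩).not_ge
    (edist_le_ediam.trans hG)

theorem distMatrix_sub_neg_one_smul_one [Fintype V] [DecidableEq V] [DecidableRel Gᶜ.Adj]
    (hG : G.ediam ≤ 2) :
    distMatrix G - (-1 : ℝ) • 1 = (of fun _ _ => 1) + Gᶜ.adjMatrix ℝ := by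
  ext u v
  by_cases huv : u = v
  · simp [distMatrix, huv]
  by_cases hadj : G.Adj u v
  · simp [distMatrix, one_apply, huv, dist_eq_one_iff_adj.mpr hadj, hadj]
  · have hdist : G.dist u v = 2 := by
      rw [SimpleGraph.dist, edist_eq_two_iff.mpr ⟨huv, hadj,
        commonNeighbors_nonempty_of_ediam_le_two hG ((compl_adj _ _ _).mpr ⟨huv, hadj⟩)⟩]
      rfl
    norm_num [distMatrix, one_apply, huv, hdist, hadj]

end Diameter

section ForbiddenSubgraphs

open SimpleGraph Matrix

theorem not_isIndContained_compl_of_mul_mul_transpose_eq_diagonal {V ι κ : Type*} [Fintype V]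
    [DecidableEq V] [Fintype ι] [DecidableEq ι] [Fintype κ] {G : SimpleGraph V}
    (hG : G.ediam ≤ 2) {k : ℕ} (hk : (sortedDistEigs G).getD k 0 ≤ -1) (hι : k < Fintype.card ι)
    {K : SimpleGraph κ} [DecidableRel K.Adj] (W : Matrix ι κ ℤ) {d : ι → ℤ} (hd : ∀ i, 0 < d i)
    (hW : W * ((of fun _ _ => 1) + K.adjMatrix ℤ) * Wᵀ = diagonal d) : ¬ K ⊴ Gᶜ := by
  classical
  rintro ⟨φ⟩
  refine not_posDef_submatrix_sub_smul_one (distMatrix_isHermitian G)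
    ((card_lt_eigenvalues_le_of_sortedDistEigs_getD_le hk).trans_lt hι) φ
    (W.map (Int.castRingHom ℝ)) ?_
  have hsub : (distMatrix G - (-1 : ℝ) • 1).submatrix φ φ =
      ((of fun _ _ => 1) + K.adjMatrix ℤ).map (Int.castRingHom ℝ) := by
    rw [distMatrix_sub_neg_one_smul_one hG]
    ext i j
    by_cases hij : K.Adj i j <;> norm_num [adjMatrix_apply, -compl_adj, φ.map_adj_iff, hij]
  rw [hsub, ← transpose_map, ← Matrix.map_mul, ← Matrix.map_mul, hW, diagonal_map (map_zero _)]
  exact PosDef.diagonal fun i => by simpa using hd i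

instance decidableRelPathGraphAdj (n : ℕ) : DecidableRel (pathGraph n).Adj :=
  fun _ _ => decidable_of_iff _ pathGraph_adj.symm

/-- The complement of the gem: a path on four vertices and an isolated vertex. -/
abbrev coGem : SimpleGraph (Fin 5) := fromEdgeSet {s(0, 1), s(1, 2), s(2, 3)}

/-- The complement of the dart: a triangle with a pendant edge and an isolated vertex. -/
abbrev coDart : SimpleGraph (Fin 5) := fromEdgeSet {s(0, 1), s(1, 2), s(0, 2), s(2, 3)}

/-- The complement of the wheel on five vertices: two disjoint edges and an isolated vertex. -/
abbrev coWheel : SimpleGraph (Fin 5) := fromEdgeSet {s(0, 1), s(2, 3)}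

/- In the following certificates `W` lists three vectors that are orthogonal with respect to the
quadratic form of `J + A(K)` and on which the form takes the positive values `d`. -/

variable {V : Type*} [Fintype V] [DecidableEq V] {G : SimpleGraph V}

theorem not_cycleGraph_five_isIndContained_compl (hG : G.ediam ≤ 2)
    (h3 : (sortedDistEigs G).getD 2 0 ≤ -1) : ¬ cycleGraph 5 ⊴ Gᶜ :=
  not_isIndContained_compl_of_mul_mul_transpose_eq_diagonal hG h3 (by decide)
    !![0, 1, -1, 1, 1; 1, 1, 0, -1, -1; 1, -1, -1, -1, 1] (d := ![2, 2, 3])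
    (by decide) (by decide)

theorem not_pathGraph_five_isIndContained_compl (hG : G.ediam ≤ 2)
    (h3 : (sortedDistEigs G).getD 2 0 ≤ -1) : ¬ pathGraph 5 ⊴ Gᶜ :=
  not_isIndContained_compl_of_mul_mul_transpose_eq_diagonal hG h3 (by decide)
    !![0, 0, 0, 0, 1; 0, 1, 1, -1, 0; 2, 0, -2, -1, 2] (d := 1) (by decide) (by decide)

theorem not_coGem_isIndContained_compl (hG : G.ediam ≤ 2)
    (h3 : (sortedDistEigs G).getD 2 0 ≤ -1) : ¬ coGem ⊴ Gᶜ :=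
  not_isIndContained_compl_of_mul_mul_transpose_eq_diagonal hG h3 (by decide)
    !![0, 1, 0, -1, -1; 1, 0, -1, 0, 1; 1, 0, 0, 1, -1] (d := 1) (by decide) (by decide)

theorem not_coDart_isIndContained_compl (hG : G.ediam ≤ 2)
    (h3 : (sortedDistEigs G).getD 2 0 ≤ -1) : ¬ coDart ⊴ Gᶜ :=
  not_isIndContained_compl_of_mul_mul_transpose_eq_diagonal hG h3 (by decide)
    !![0, 1, 0, -1, -1; 1, 0, 0, -1, 1; 1, -1, 1, 1, -1] (d := 1) (by decide) (by decide)

theorem not_coWheel_isIndContained_compl (hG : G.ediam ≤ 2)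
    (h3 : (sortedDistEigs G).getD 2 0 ≤ -1) : ¬ coWheel ⊴ Gᶜ :=
  not_isIndContained_compl_of_mul_mul_transpose_eq_diagonal hG h3 (by decide)
    !![0, 0, 0, 1, 0; 0, 0, 1, 0, -2; 1, 1, -1, 1, -1] (d := 1) (by decide) (by decide)

end ForbiddenSubgraphs

section PathFreeGraphs

open SimpleGraph

theorem isIndContained_of_forall_lt {ι V : Type*} [LinearOrder ι] {K : SimpleGraph ι}
    {G : SimpleGraph V} (f : ι → V) (hadj : ∀ i j, i < j → K.Adj i j → G.Adj (f i) (f j))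
    (hnadj : ∀ i j, i < j → ¬ K.Adj i j → Gᶜ.Adj (f i) (f j)) : K ⊴ G := by
  have f_injective : f.Injective := Function.Injective.of_lt_imp_ne fun i j hij => by
    by_cases h : K.Adj i j
    exacts [(hadj i j hij h).ne, (hnadj i j hij h).ne]
  have adj_iff (i j : ι) (hij : i < j) : G.Adj (f i) (f j) ↔ K.Adj i j :=
    ⟨fun h => by_contra fun hK => ((compl_adj _ _ _).mp (hnadj i j hij hK)).2 h, hadj i j hij⟩
  refine ⟨⟨⟨f, f_injective⟩, fun {i j} => show G.Adj (f i) (f j) ↔ _ from ?_⟩⟩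
  rcases lt_trichotomy i j with hij | rfl | hij
  · exact adj_iff i j hij
  · simp
  · simpa only [adj_comm] using adj_iff j i hij

variable {V : Type*} {G : SimpleGraph V}

theorem exists_adj_of_pathGraph_four_isIndContained (h : pathGraph 4 ⊴ G) :
    ∃ a b c d, G.Adj a b ∧ G.Adj b c ∧ G.Adj c d ∧ Gᶜ.Adj a c ∧ Gᶜ.Adj a d ∧ Gᶜ.Adj b d := by
  obtain ⟨φ⟩ := h
  have adj {i j : Fin 4} : (pathGraph 4).Adj i j → G.Adj (φ i) (φ j) := φ.map_adj_iff.mpr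
  have compl {i j : Fin 4} : (pathGraph 4)ᶜ.Adj i j → Gᶜ.Adj (φ i) (φ j) :=
    (Embedding.complEquiv φ).map_adj_iff.mpr
  exact ⟨φ 0, φ 1, φ 2, φ 3, adj (by decide), adj (by decide), adj (by decide),
    compl (by decide), compl (by decide), compl (by decide)⟩

theorem not_pathGraph_four_isIndContained_of_ediam_le_two (hG : G.ediam ≤ 2)
    (hC5 : ¬ cycleGraph 5 ⊴ Gᶜ) (hP5 : ¬ pathGraph 5 ⊴ Gᶜ) (hcoGem : ¬ coGem ⊴ Gᶜ) :
    ¬ pathGraph 4 ⊴ G := by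
  intro hP4
  obtain ⟨a, b, c, d, hab, hbc, hcd, hac, had, hbd⟩ :=
    exists_adj_of_pathGraph_four_isIndContained hP4
  obtain ⟨e, hae, hde⟩ := commonNeighbors_nonempty_of_ediam_le_two hG had
  rw [mem_neighborSet] at hae hde
  have compl_of_not_adj {v : V} (hne : v ≠ e) (hv : ¬ G.Adj v e) : Gᶜ.Adj v e :=
    (compl_adj _ _ _).mpr ⟨hne, hv⟩
  have hbe : b ≠ e := fun h => ((compl_adj _ _ _).mp hbd).2 (h ▸ hde.symm)
  have hce : c ≠ e := fun h => ((compl_adj _ _ _).mp hac).2 (h ▸ hae)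
  by_cases hbe' : G.Adj b e <;> by_cases hce' : G.Adj c e
  · refine hcoGem (isIndContained_of_forall_lt ![c, a, d, b, e] ?_ ?_) <;>
      simp_all [-compl_adj, Fin.forall_fin_succ, adj_comm]
  · have := compl_of_not_adj hce hce'
    refine hP5 (isIndContained_of_forall_lt ![e, c, a, d, b] ?_ ?_) <;>
      simp_all [-compl_adj, Fin.forall_fin_succ, adj_comm, pathGraph_adj]
  · have := compl_of_not_adj hbe hbe'
    refine hP5 (isIndContained_of_forall_lt ![c, a, d, b, e] ?_ ?_) <;>
      simp_all [-compl_adj, Fin.forall_fin_succ, adj_comm, pathGraph_adj]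
  · have := compl_of_not_adj hbe hbe'
    have := compl_of_not_adj hce hce'
    refine hC5 (isIndContained_of_forall_lt ![c, a, d, b, e] ?_ ?_) <;>
      simp_all +decide [-compl_adj, Fin.forall_fin_succ, adj_comm, cycleGraph_adj]

/-- The vertex set `s` induces a disconnected subgraph of `G`: it splits into two nonempty parts
with no edge of `G` between them. -/
def IsDisconnectedSet (G : SimpleGraph V) (s : Set V) : Prop :=
  ∃ a b : Set V, a.Nonempty ∧ b.Nonempty ∧ a ∪ b = s ∧ Gᶜ.IsCompleteBetween a b

theorem isCompleteBetween_left_of_maximal_isDisconnectedSet_union (hP4 : ¬ pathGraph 4 ⊴ G)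
    {a b : Set V} (hb : b.Nonempty) (hab : Gᶜ.IsCompleteBetween a b)
    (hmax : Maximal (IsDisconnectedSet G) (a ∪ b)) : G.IsCompleteBetween a (a ∪ b)ᶜ := by
  intro u hu v hv
  by_contra huv
  have ne_v {w : V} (hw : w ∈ a ∪ b) : w ≠ v := fun h => hv (h ▸ hw)
  have no_extension {a₁ b₁ : Set V} (ha₁ : a₁.Nonempty) (hb₁ : b₁.Nonempty)
      (hsub : insert v (a ∪ b) ⊆ a₁ ∪ b₁) : ¬ Gᶜ.IsCompleteBetween a₁ b₁ := fun hab₁ =>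
    hv (hmax.2 ⟨a₁, b₁, ha₁, hb₁, rfl, hab₁⟩ ((Set.subset_insert _ _).trans hsub)
      (hsub (Set.mem_insert _ _)))
  obtain ⟨w, hw, hvw⟩ : ∃ w ∈ b, G.Adj v w := by
    by_contra! h
    refine no_extension (Set.insert_nonempty v a) hb Set.insert_union.ge ?_
    rintro x (rfl | hx) y hy
    exacts [(compl_adj _ _ _).mpr ⟨(ne_v (.inr hy)).symm, h y hy⟩, hab hx hy]
  obtain ⟨x, hx, hxv, y, hy, hyv, hxy⟩ :
      ∃ x ∈ a, ¬ G.Adj x v ∧ ∃ y ∈ a, G.Adj y v ∧ G.Adj x y := by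
    by_contra! h
    refine no_extension (a₁ := {x ∈ a | ¬ G.Adj x v}) (b₁ := insert v ({y ∈ a | G.Adj y v} ∪ b))
      ⟨u, hu, huv⟩ (Set.insert_nonempty _ _) (fun x => ?_) ?_
    · simp only [Set.mem_insert_iff, Set.mem_union, Set.mem_ofPred_eq]
      tauto
    · rintro x ⟨hx, hxv⟩ y (rfl | ⟨hy, hyv⟩ | hy)
      · exact (compl_adj _ _ _).mpr ⟨ne_v (.inl hx), hxv⟩
      · exact (compl_adj _ _ _).mpr ⟨fun hxy => hxv (hxy ▸ hyv), h x hx hxv y hy hyv⟩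
      · exact hab hx hy
  have hxv' : Gᶜ.Adj x v := (compl_adj _ _ _).mpr ⟨ne_v (.inl hx), hxv⟩
  have hxw := hab hx hw
  have hyw := hab hy hw
  refine hP4 (isIndContained_of_forall_lt ![x, y, v, w] ?_ ?_) <;>
    simp_all [-compl_adj, Fin.forall_fin_succ, pathGraph_adj]

theorem isCompleteBetween_compl_of_maximal_isDisconnectedSet (hP4 : ¬ pathGraph 4 ⊴ G)
    {s : Set V} (hmax : Maximal (IsDisconnectedSet G) s) : G.IsCompleteBetween s sᶜ := by
  obtain ⟨a, b, ha, hb, rfl, hab⟩ := hmax.1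
  rintro u (hu | hu) v hv
  · exact isCompleteBetween_left_of_maximal_isDisconnectedSet_union hP4 hb hab hmax hu hv
  · rw [Set.union_comm] at hmax hv
    exact isCompleteBetween_left_of_maximal_isDisconnectedSet_union hP4 ha hab.symm hmax hu hv

theorem not_isDisconnectedSet_univ (hG : G.Connected) : ¬ IsDisconnectedSet G Set.univ := by
  rintro ⟨a, b, ⟨u, hu⟩, ⟨v, hv⟩, huniv, hab⟩
  obtain ⟨p⟩ := hG.preconnected u v
  obtain ⟨d, -, hfst, hsnd⟩ := p.exists_boundary_dart a hu
    (Set.disjoint_right.mp hab.disjoint hv)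
  have hsnd' : d.snd ∈ b := (huniv ▸ Set.mem_univ d.snd).resolve_left hsnd
  exact ((compl_adj _ _ _).mp (hab hfst hsnd')).2 d.adj

theorem exists_maximal_isDisconnectedSet [Finite V] (hG : G ≠ ⊤) :
    ∃ s, Maximal (IsDisconnectedSet G) s := by
  obtain ⟨u, v, huv, hadj⟩ := ne_top_iff_exists_not_adj.mp hG
  have hsep : IsDisconnectedSet G ({u} ∪ {v}) :=
    ⟨{u}, {v}, Set.singleton_nonempty u, Set.singleton_nonempty v, rfl, by
      rintro _ rfl _ rfl
      exact (compl_adj _ _ _).mpr ⟨huv, hadj⟩⟩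
  obtain ⟨s, -, hs⟩ := Finite.exists_le_maximal hsep
  exact ⟨s, hs⟩

end PathFreeGraphs

section InducedPaths

open SimpleGraph

variable {V : Type*} {G : SimpleGraph V} {s t : Set V}

theorem exists_adj_of_hasInducedIso_pathGraph_three
    (h : hasInducedIso (G.induce s) (pathGraph 3)) :
    ∃ x ∈ s, ∃ y ∈ s, ∃ z ∈ s, G.Adj x y ∧ G.Adj y z ∧ Gᶜ.Adj x z := by
  obtain ⟨t, ⟨φ⟩⟩ := h
  let ψ : pathGraph 3 ↪g G :=
    ((Embedding.induce s).comp (Embedding.induce t)).comp φ.symm.toEmbedding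
  have adj {i j : Fin 3} : (pathGraph 3).Adj i j → G.Adj (ψ i) (ψ j) := ψ.map_adj_iff.mpr
  have compl {i j : Fin 3} : (pathGraph 3)ᶜ.Adj i j → Gᶜ.Adj (ψ i) (ψ j) :=
    (Embedding.complEquiv ψ).map_adj_iff.mpr
  exact ⟨ψ 0, (φ.symm 0).1.2, ψ 1, (φ.symm 1).1.2, ψ 2, (φ.symm 2).1.2, adj (by decide),
    adj (by decide), compl (by decide)⟩

theorem IsDisconnectedSet.exists_forall_compl_adj (hs : IsDisconnectedSet G s) {x y z : V}
    (hx : x ∈ s) (hy : y ∈ s) (hz : z ∈ s) (hxy : G.Adj x y) (hyz : G.Adj y z) :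
    ∃ d ∈ s, Gᶜ.Adj x d ∧ Gᶜ.Adj y d ∧ Gᶜ.Adj z d := by
  obtain ⟨a, b, ha, hb, rfl, hab⟩ := hs
  wlog hya : y ∈ a generalizing a b
  · rw [Set.union_comm] at *
    exact this b a hb ha hab.symm hx hy hz (hy.resolve_right hya)
  have mem_left {v : V} (hv : v ∈ a ∪ b) (hvy : G.Adj v y) : v ∈ a :=
    hv.resolve_right fun hvb => ((compl_adj _ _ _).mp (hab hya hvb)).2 hvy.symm
  obtain ⟨d, hd⟩ := hb
  exact ⟨d, .inr hd, hab (mem_left hx hxy) hd, hab hya hd, hab (mem_left hz hyz.symm) hd⟩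

theorem IsDisconnectedSet.nonempty (hs : IsDisconnectedSet G s) : s.Nonempty := by
  obtain ⟨a, b, ha, -, rfl, -⟩ := hs
  exact ha.inl

theorem IsDisconnectedSet.not_isClique (hs : IsDisconnectedSet G s) : ¬ G.IsClique s := by
  obtain ⟨a, b, ⟨u, hu⟩, ⟨v, hv⟩, rfl, hab⟩ := hs
  have huv := (compl_adj _ _ _).mp (hab hu hv)
  exact fun h => huv.2 (h (.inl hu) (.inr hv) huv.1)

theorem not_hasInducedIso_pathGraph_three_of_isDisconnectedSet (hcoDart : ¬ coDart ⊴ Gᶜ)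
    (hs : IsDisconnectedSet G s) (ht : t.Nonempty) (hst : G.IsCompleteBetween s t) :
    ¬ hasInducedIso (G.induce s) (pathGraph 3) := by
  intro h
  obtain ⟨x, hx, y, hy, z, hz, hxy, hyz, hxz⟩ := exists_adj_of_hasInducedIso_pathGraph_three h
  obtain ⟨d, hd, hxd, hyd, hzd⟩ := hs.exists_forall_compl_adj hx hy hz hxy hyz
  obtain ⟨r, hr⟩ := ht
  have hxr := hst hx hr
  have hyr := hst hy hr
  have hzr := hst hz hr
  have hdr := hst hd hr
  refine hcoDart (isIndContained_of_forall_lt ![x, z, d, y, r] ?_ ?_) <;>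
    simp_all [-compl_adj, Fin.forall_fin_succ, adj_comm]

theorem not_hasInducedIso_pathGraph_three_of_isCompleteBetween (hcoWheel : ¬ coWheel ⊴ Gᶜ)
    (hs : ¬ G.IsClique s) (hst : G.IsCompleteBetween s t) :
    ¬ hasInducedIso (G.induce t) (pathGraph 3) := by
  intro h
  obtain ⟨x, hx, y, hy, z, hz, hxy, hyz, hxz⟩ := exists_adj_of_hasInducedIso_pathGraph_three h
  obtain ⟨u, hu, v, hv, huv, hadj⟩ : ∃ u ∈ s, ∃ v ∈ s, u ≠ v ∧ ¬ G.Adj u v := by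
    simpa [isClique_iff, Set.Pairwise] using hs
  have huv' : Gᶜ.Adj u v := (compl_adj _ _ _).mpr ⟨huv, hadj⟩
  have hux := hst hu hx
  have huy := hst hu hy
  have huz := hst hu hz
  have hvx := hst hv hx
  have hvy := hst hv hy
  have hvz := hst hv hz
  refine hcoWheel (isIndContained_of_forall_lt ![u, v, x, z, y] ?_ ?_) <;>
    simp_all [-compl_adj, Fin.forall_fin_succ, adj_comm]

end InducedPaths

open SimpleGraph in
theorem join_decomposition_of_distance_eigenvalue_conditions_general {V : Type*} [Fintype V]
    [DecidableEq V] (G : SimpleGraph V) (hG : G.Connected) (hnc : G ≠ ⊤)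
    (h3 : (sortedDistEigs G).getD 2 0 ≤ -1)
    (hsmall : -3 ≤ (sortedDistEigs G).getD (Fintype.card V - 1) 0) :
    ∃ s : Set V, s.Nonempty ∧ sᶜ.Nonempty ∧ (∀ u ∈ s, ∀ v ∈ sᶜ, G.Adj u v) ∧
      ¬ hasInducedIso (G.induce s) (pathGraph 3) ∧
      ¬ hasInducedIso (G.induce sᶜ) (pathGraph 3) := by
  have hdiam : G.ediam ≤ 2 := ediam_le_two_of_posSemidef hG
    (posSemidef_sub_smul_one _ (le_eigenvalues_of_le_sortedDistEigs_getD hsmall))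
  have hP4 : ¬ pathGraph 4 ⊴ G := not_pathGraph_four_isIndContained_of_ediam_le_two hdiam
    (not_cycleGraph_five_isIndContained_compl hdiam h3)
    (not_pathGraph_five_isIndContained_compl hdiam h3) (not_coGem_isIndContained_compl hdiam h3)
  obtain ⟨s, hs⟩ := exists_maximal_isDisconnectedSet hnc
  have hjoin : G.IsCompleteBetween s sᶜ :=
    isCompleteBetween_compl_of_maximal_isDisconnectedSet hP4 hs
  have hsc : sᶜ.Nonempty := Set.nonempty_compl.mpr fun h =>
    not_isDisconnectedSet_univ hG (h ▸ hs.1)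
  exact ⟨s, hs.1.nonempty, hsc, fun u hu v hv => hjoin hu hv,
    not_hasInducedIso_pathGraph_three_of_isDisconnectedSet
      (not_coDart_isIndContained_compl hdiam h3) hs.1 hsc hjoin,
    not_hasInducedIso_pathGraph_three_of_isCompleteBetween
      (not_coWheel_isIndContained_compl hdiam h3) hs.1.not_isClique hjoin⟩

/- **Statement 12.** Let `G` be a non-complete finite connected simple graph on `n ≥ 4`
vertices with `∂_3(G) ≤ −1` and `∂_n(G) ≥ −3`.  Then `G = G_1 ∨ G_2` is a join of two proper
nonempty induced subgraphs (given by a set `s` and its complement, with all cross edges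
present), at most one of which contains an induced `P_3`; moreover if one of the two parts
contains an induced `P_3` then that part is connected and the other part is complete. -/
theorem join_decomposition_of_distance_eigenvalue_conditions
    {V : Type*} [Fintype V] [DecidableEq V] (G : SimpleGraph V)
    (hG : G.Connected) (hnc : G ≠ ⊤) (hn : 4 ≤ Fintype.card V)
    (h3 : (sortedDistEigs G).getD 2 0 ≤ -1)
    (hsmall : -3 ≤ (sortedDistEigs G).getD (Fintype.card V - 1) 0) :
    ∃ s : Set V, s.Nonempty ∧ sᶜ.Nonempty ∧ (∀ u ∈ s, ∀ v ∈ sᶜ, G.Adj u v) ∧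
      ¬ (hasInducedIso (G.induce s) (SimpleGraph.pathGraph 3) ∧
          hasInducedIso (G.induce sᶜ) (SimpleGraph.pathGraph 3)) ∧
      (hasInducedIso (G.induce s) (SimpleGraph.pathGraph 3) →
        (G.induce s).Connected ∧ G.IsClique sᶜ) ∧
      (hasInducedIso (G.induce sᶜ) (SimpleGraph.pathGraph 3) →
        (G.induce sᶜ).Connected ∧ G.IsClique s) := by
  obtain ⟨s, hs, hsc, hjoin, h₁, h₂⟩ :=
    join_decomposition_of_distance_eigenvalue_conditions_general G hG hnc h3 hsmall
  exact ⟨s, hs, hsc, hjoin, fun h => h₁ h.1, fun h => absurd h h₁, fun h => absurd h h₂⟩
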